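/- arXiv:2003.03874 — 6 statements merged into one kernel-verified Lean document; each statement's English description precedes it below -/
import Mathlib

section
/- Let σ > 0 and v > 0 be real numbers and let m̄ = (−(1+v²) + √(1 + 2v² + 4σv³ + 9v⁴)) / (2v(2v+σ)). Then the point m = (m̄, m̄) is an equilibrium of the Seeley vector field with equal option values, i.e., f((m̄, m̄), (v, v)) = 0 (both components vanish). -/
/-- The Seeley et al. vector field on `ℝ² × ℝ²` with parameter `σ`:
its `i`-th component is `v_i m_U − m_i (1/v_i − v_i m_U + σ m_j)`, with
`m_U = 1 − m₁ − m₂`. -/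
noncomputable def seeley (σ : ℝ) (m v : ℝ × ℝ) : ℝ × ℝ :=
  (v.1 * (1 - m.1 - m.2) - m.1 * (1 / v.1 - v.1 * (1 - m.1 - m.2) + σ * m.2),
   v.2 * (1 - m.1 - m.2) - m.2 * (1 / v.2 - v.2 * (1 - m.1 - m.2) + σ * m.1))

/-- for `σ > 0`, `v > 0`, the symmetric point `(mbar, mbar)` with
`mbar = (−(1+v²) + √(1 + 2v² + 4σv³ + 9v⁴)) / (2v(2v+σ))` is an equilibrium of
the Seeley vector field with equal option values `(v, v)`. -/
theorem seeley_symmetric_equilibrium (σ v : ℝ) (hσ : 0 < σ) (hv : 0 < v) (mbar : ℝ)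
    (hm : mbar = (-(1 + v ^ 2) + Real.sqrt (1 + 2 * v ^ 2 + 4 * σ * v ^ 3 + 9 * v ^ 4)) /
      (2 * v * (2 * v + σ))) :
    seeley σ (mbar, mbar) (v, v) = (0, 0) := by
  have hD : 0 ≤ 1 + 2 * v ^ 2 + 4 * σ * v ^ 3 + 9 * v ^ 4 := by positivity
  have hs := Real.sq_sqrt hD
  have ha : 0 < 2 * v * (2 * v + σ) := by positivity
  rw [eq_div_iff ha.ne'] at hm
  have hs' : Real.sqrt (1 + 2 * v ^ 2 + 4 * σ * v ^ 3 + 9 * v ^ 4)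
      = mbar * (2 * v * (2 * v + σ)) + (1 + v ^ 2) := by linarith
  rw [hs'] at hs
  have hq : v * (2 * v + σ) * mbar ^ 2 + (1 + v ^ 2) * mbar - v ^ 2 = 0 := by
    have h0 : (2 * v * (2 * v + σ)) *
        (v * (2 * v + σ) * mbar ^ 2 + (1 + v ^ 2) * mbar - v ^ 2) = 0 := by
      linear_combination hs / 2
    exact (mul_eq_zero.mp h0).resolve_left ha.ne'
  have key : v * (1 - mbar - mbar) -
      mbar * (1 / v - v * (1 - mbar - mbar) + σ * mbar) = 0 := by
    have hv' := hv.ne'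
    field_simp
    linear_combination -hq
  simp only [seeley, Prod.mk.injEq]
  exact ⟨key, key⟩
end

section
/- Let σ ∈ ℝ, v > 0 and m̄ ∈ ℝ. The map F : ℝ² → ℝ², F(m) = f(m, (v, v)), is differentiable at the point (m̄, m̄), and its Fréchet derivative L at (m̄, m̄) satisfies L(1, −1) = λ₁ · (1, −1) and L(1, 1) = λ₂ · (1, 1), where λ₁ = (−2m̄v² + v² − 1)/v and λ₂ = (−4m̄v² − 2m̄σv − v² − 1)/v. Equivalently, the Jacobian matrix of F at (m̄, m̄) is the symmetric 2×2 matrix with diagonal entries −1/v − 3vm̄ − σm̄ and off-diagonal entries −v(1+m̄) − σm̄, whose eigenvalues are λ₁ and λ₂ with eigenvectors (1, −1) and (1, 1), respectively. -/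
/-- the map `F(m) = f(m, (v, v))` is differentiable at `(mbar, mbar)`,
its Fréchet derivative there sends `(1, −1) ↦ λ₁ • (1, −1)` and `(1, 1) ↦ λ₂ • (1, 1)`
with `λ₁ = (−2 mbar v² + v² − 1)/v`, `λ₂ = (−4 mbar v² − 2 mbar σ v − v² − 1)/v`;
equivalently its Jacobian matrix is symmetric with diagonal entries
`−1/v − 3 v mbar − σ mbar` and off-diagonal entries `−v(1+mbar) − σ mbar` (the
columns being the images of `(1,0)` and `(0,1)`). -/
theorem seeley_symmetric_jacobian (σ v mbar : ℝ) (hv : 0 < v) :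
    DifferentiableAt ℝ (fun m : ℝ × ℝ => seeley σ m (v, v)) (mbar, mbar) ∧
    fderiv ℝ (fun m : ℝ × ℝ => seeley σ m (v, v)) (mbar, mbar) (1, -1)
      = ((-2 * mbar * v ^ 2 + v ^ 2 - 1) / v) • ((1 : ℝ), (-1 : ℝ)) ∧
    fderiv ℝ (fun m : ℝ × ℝ => seeley σ m (v, v)) (mbar, mbar) (1, 1)
      = ((-4 * mbar * v ^ 2 - 2 * mbar * σ * v - v ^ 2 - 1) / v) • ((1 : ℝ), (1 : ℝ)) ∧
    fderiv ℝ (fun m : ℝ × ℝ => seeley σ m (v, v)) (mbar, mbar) (1, 0)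
      = ((-1 / v - 3 * v * mbar - σ * mbar), (-(v * (1 + mbar)) - σ * mbar)) ∧
    fderiv ℝ (fun m : ℝ × ℝ => seeley σ m (v, v)) (mbar, mbar) (0, 1)
      = ((-(v * (1 + mbar)) - σ * mbar), (-1 / v - 3 * v * mbar - σ * mbar)) := by
  have h1 : HasFDerivAt (fun m : ℝ × ℝ => m.1) (ContinuousLinearMap.fst ℝ ℝ ℝ) (mbar, mbar) :=
    hasFDerivAt_fst
  have h2 : HasFDerivAt (fun m : ℝ × ℝ => m.2) (ContinuousLinearMap.snd ℝ ℝ ℝ) (mbar, mbar) :=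
    hasFDerivAt_snd
  have hU := (h1.const_sub 1).sub h2
  have hA := (hU.const_mul v).sub
    (h1.mul (((hU.const_mul v).const_sub (1 / v)).add (h2.const_mul σ)))
  have hB := (hU.const_mul v).sub
    (h2.mul (((hU.const_mul v).const_sub (1 / v)).add (h1.const_mul σ)))
  have hF := hA.prodMk hB
  have hF' : HasFDerivAt (fun m : ℝ × ℝ => seeley σ m (v, v)) _ (mbar, mbar) := hF
  have hv' : v ≠ 0 := hv.ne'
  refine ⟨hF'.differentiableAt, ?_, ?_, ?_, ?_⟩ <;> rw [hF'.fderiv] <;> ext <;> simp <;>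
    field_simp <;> ring
end

section
/- Let v > 1 and σ > 0, and let m̄ = (−(1+v²) + √(1 + 2v² + 4σv³ + 9v⁴)) / (2v(2v+σ)). Set λ₁ = (−2m̄v² + v² − 1)/v and λ₂ = (−4m̄v² − 2m̄σv − v² − 1)/v. Then: (i) m̄ > 0 and λ₂ < 0; (ii) λ₁ = 0 if and only if σ = 4v³/(v² − 1)²; (iii) λ₁ > 0 if and only if σ > 4v³/(v² − 1)². In particular, the symmetric equilibrium of the Seeley vector field loses stability (the eigenvalue λ₁ of its Jacobian increases through zero) exactly as σ increases through the critical value σ* = 4v³/(v² − 1)². -/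
/-- for `v > 1`, `σ > 0`, and `mbar`, `λ₁`, `λ₂` as in the analysis of the
symmetric equilibrium of the Seeley dynamics: (i) `mbar > 0` and `λ₂ < 0`;
(ii) `λ₁ = 0 ↔ σ = 4v³/(v²−1)²`; (iii) `λ₁ > 0 ↔ σ > 4v³/(v²−1)²`.  Hence the
eigenvalue `λ₁` of the Jacobian increases through zero exactly as `σ` increases
through the critical value `σ* = 4v³/(v²−1)²`. -/
theorem seeley_pitchfork_critical_sigma (v σ : ℝ) (hv : 1 < v) (hσ : 0 < σ)
    (mbar : ℝ)
    (hm : mbar = (-(1 + v ^ 2) + Real.sqrt (1 + 2 * v ^ 2 + 4 * σ * v ^ 3 + 9 * v ^ 4)) /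
      (2 * v * (2 * v + σ)))
    (lam₁ lam₂ : ℝ)
    (hl1 : lam₁ = (-2 * mbar * v ^ 2 + v ^ 2 - 1) / v)
    (hl2 : lam₂ = (-4 * mbar * v ^ 2 - 2 * mbar * σ * v - v ^ 2 - 1) / v) :
    (0 < mbar ∧ lam₂ < 0) ∧
    (lam₁ = 0 ↔ σ = 4 * v ^ 3 / (v ^ 2 - 1) ^ 2) ∧
    (0 < lam₁ ↔ 4 * v ^ 3 / (v ^ 2 - 1) ^ 2 < σ) := by
  have hv0 : 0 < v := by linarith
  have hD : 0 ≤ 1 + 2 * v ^ 2 + 4 * σ * v ^ 3 + 9 * v ^ 4 := by positivity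
  have hs := Real.sq_sqrt hD
  have hlt : 1 + v ^ 2 < Real.sqrt (1 + 2 * v ^ 2 + 4 * σ * v ^ 3 + 9 * v ^ 4) := by
    apply Real.lt_sqrt_of_sq_lt
    have : 0 < 4 * σ * v ^ 3 + 8 * v ^ 4 := by positivity
    nlinarith
  generalize Real.sqrt (1 + 2 * v ^ 2 + 4 * σ * v ^ 3 + 9 * v ^ 4) = s at *
  have ha : 0 < v * (2 * v + σ) := by positivity
  have hm0 : 0 < mbar := by
    rw [hm]
    apply div_pos (by linarith) (by linarith)
  have hms : s = 2 * v * (2 * v + σ) * mbar + (1 + v ^ 2) := by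
    rw [hm]
    field_simp
    ring
  have hQ : v * (2 * v + σ) * mbar ^ 2 + (1 + v ^ 2) * mbar - v ^ 2 = 0 := by
    rw [hms] at hs
    have : 4 * (v * (2 * v + σ)) *
        (v * (2 * v + σ) * mbar ^ 2 + (1 + v ^ 2) * mbar - v ^ 2) = 0 := by
      linear_combination hs
    rcases mul_eq_zero.mp this with h | h
    · linarith
    · exact h
  have hw : 0 < v ^ 2 - 1 := by nlinarith
  have hl : lam₁ * v = -2 * mbar * v ^ 2 + v ^ 2 - 1 := by
    rw [hl1]
    field_simp
  obtain ⟨K, hK⟩ : ∃ K, K = v * (2 * v + σ) * (v ^ 2 - 1 + 2 * v ^ 2 * mbar)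
      + 2 * v ^ 2 * (1 + v ^ 2) := ⟨_, rfl⟩
  have hKpos : 0 < K := by
    rw [hK]
    positivity
  have key : σ * (v ^ 2 - 1) ^ 2 - 4 * v ^ 3 = lam₁ * K := by
    have : v * (σ * (v ^ 2 - 1) ^ 2 - 4 * v ^ 3) = v * (lam₁ * K) := by
      rw [hK]
      linear_combination (-(v * (2 * v + σ) * (v ^ 2 - 1 + 2 * v ^ 2 * mbar)
      + 2 * v ^ 2 * (1 + v ^ 2))) * hl + 4 * v ^ 4 * hQ
    exact mul_left_cancel₀ hv0.ne' this
  have hw2 : 0 < (v ^ 2 - 1) ^ 2 := by positivity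
  refine ⟨⟨hm0, ?_⟩, ?_, ?_⟩
  · rw [hl2]
    apply div_neg_of_neg_of_pos _ hv0
    have h1 : 0 < mbar * v ^ 2 := by positivity
    have h2 : 0 < mbar * σ * v := by positivity
    nlinarith
  · rw [eq_div_iff hw2.ne']
    constructor
    · intro h
      rw [h] at key
      linarith
    · intro h
      have : lam₁ * K = 0 := by linarith
      exact (mul_eq_zero.mp this).resolve_right hKpos.ne'
  · rw [div_lt_iff₀ hw2, ← mul_pos_iff_of_pos_right hKpos, ← key, sub_pos]
end

section
/- Let σ > 0, v̄ > 0 and α ∈ [−2, 2], and define the reduced vector field g(x) = (σ/(2v̄))(1 − x²)(2x + 3α)/(6 + αx) and the unfolded pitchfork field P(x) = x(1 − x²) + (3/2)α − (3/2)α x². Then for every x ∈ [−1, 1] one has 6 + αx > 0 and g(x) = c(x) · P(x), where c(x) = σ/(v̄(6 + αx)) > 0. In particular g and P have exactly the same zeros on [−1, 1] and the same sign at every point of [−1, 1], so the reduced dynamics ẋ = g(x) are equivalent, up to a positive time rescaling, to an unfolding of the pitchfork bifurcation ẋ = x(μ − x²) + α₁ + α₂x² with μ = 1, α₁ = (3/2)α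 and α₂ = −(3/2)α. -/
/-- The reduced (singularly perturbed) motivation vector field
`g(x) = (σ/(2 vbar)) (1 − x²)(2x + 3α)/(6 + αx)`. -/
noncomputable def gred (σ vbar α x : ℝ) : ℝ :=
  σ / (2 * vbar) * ((1 - x ^ 2) * (2 * x + 3 * α) / (6 + α * x))

/-- The unfolded pitchfork vector field with `μ = 1`, `α₁ = (3/2)α`, `α₂ = −(3/2)α`:
`P(x) = x(1 − x²) + (3/2)α − (3/2)α x²`. -/
noncomputable def punf (α x : ℝ) : ℝ := x * (1 - x ^ 2) + 3 / 2 * α - 3 / 2 * α * x ^ 2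

/-- for `σ > 0`, `vbar > 0`, `α ∈ [−2, 2]` and every `x ∈ [−1, 1]`:
`6 + αx > 0`, `g(x) = c(x) P(x)` with `c(x) = σ/(vbar (6 + αx)) > 0`; in particular
`g` and `P` have the same zeros and the same sign on `[−1, 1]`, so `ẋ = g(x)` is a
positive time rescaling of the pitchfork unfolding `ẋ = x(1 − x²) + (3/2)α − (3/2)α x²`. -/
theorem reduced_dynamics_is_unfolded_pitchfork (σ vbar α : ℝ) (hσ : 0 < σ)
    (hv : 0 < vbar) (hα : α ∈ Set.Icc (-2 : ℝ) 2) :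
    ∀ x ∈ Set.Icc (-1 : ℝ) 1,
      0 < 6 + α * x ∧
      gred σ vbar α x = σ / (vbar * (6 + α * x)) * punf α x ∧
      0 < σ / (vbar * (6 + α * x)) ∧
      (gred σ vbar α x = 0 ↔ punf α x = 0) ∧
      (0 < gred σ vbar α x ↔ 0 < punf α x) ∧
      (gred σ vbar α x < 0 ↔ punf α x < 0) := by
  rintro x ⟨hx1, hx2⟩
  obtain ⟨ha1, ha2⟩ := hα
  have h6 : 0 < 6 + α * x := by
    nlinarith [mul_nonneg (sub_nonneg.2 ha1) (sub_nonneg.2 hx1),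
      mul_nonneg (sub_nonneg.2 ha2) (sub_nonneg.2 hx2)]
  have hc : 0 < σ / (vbar * (6 + α * x)) := by positivity
  have he : gred σ vbar α x = σ / (vbar * (6 + α * x)) * punf α x := by
    have h6' := h6.ne'
    unfold gred punf
    rw [div_mul_div_comm, div_mul_eq_mul_div, div_eq_div_iff (by positivity) (by positivity)]
    ring
  refine ⟨h6, he, hc, ?_, ?_, ?_⟩
  · rw [he, mul_eq_zero, or_iff_right hc.ne']
  · rw [he, mul_pos_iff_of_pos_left hc]
  · rw [he]; exact ⟨fun h => by by_contra hn; exact absurd h (not_lt.2 (mul_nonneg hc.le (not_lt.1 hn))), fun h => mul_neg_of_pos_of_neg hc h⟩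
end

section
/- Let T be a full binary tree, let v > 0, σ > 0, and assign to every leaf of T the value v. Define the node value u recursively by u(leaf) = v and u(node) = (u(left child) + u(right child))/2. Then: (i) u(n) = v for every node n of T; (ii) letting m̄ = (−(1+v²) + √(1 + 2v² + 4σv³ + 9v⁴)) / (2v(2v+σ)) and assigning to every internal node the state m_i = (m̄, m̄) and value pair v_i = (u(left child), u(right child)) = (v, v), the Seeley vector field vanishes at every internal node: f((m̄, m̄), (v, v)) = 0. Hence the constant state m = m̄·𝟙 is an equilibrium of the stacked tree dynamics in which each internal node's state evolves by the Seeley vector field applied to its own (state, value) pair. -/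
/-- A full binary tree (shape only): either a leaf or a node with two subtrees. -/
inductive BT where
  | leaf : BT
  | node : BT → BT → BT

/-- The node value for leaf value `v`: `u(leaf) = v`, and the value of an internal
node is the average of its children's values. -/
noncomputable def uval (v : ℝ) : BT → ℝ
  | .leaf => v
  | .node l r => (uval v l + uval v r) / 2

/-- assign value `v > 0` to every leaf of a full binary tree and let
`σ > 0`.  Then (i) `u(n) = v` for every node `n`; (ii) with
`mbar = (−(1+v²) + √(1 + 2v² + 4σv³ + 9v⁴)) / (2v(2v+σ))`, the Seeley vector field
vanishes at every internal node when each node carries state `(mbar, mbar)` and value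
pair `(u(left child), u(right child))`.  Hence the constant state `mbar·𝟙` is an
equilibrium of the stacked tree dynamics. -/
theorem tree_symmetric_equilibrium (v σ : ℝ) (hv : 0 < v) (hσ : 0 < σ) (mbar : ℝ)
    (hm : mbar = (-(1 + v ^ 2) + Real.sqrt (1 + 2 * v ^ 2 + 4 * σ * v ^ 3 + 9 * v ^ 4)) /
      (2 * v * (2 * v + σ))) :
    (∀ t : BT, uval v t = v) ∧
    (∀ l r : BT, seeley σ (mbar, mbar) (uval v l, uval v r) = (0, 0)) := by
  have hu : ∀ t : BT, uval v t = v := by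
    intro t
    induction t with
    | leaf => rfl
    | node l r hl hr =>
      simp only [uval, hl, hr]
      ring
  have ha : 0 < v * (2 * v + σ) := by positivity
  have hD : 0 ≤ 1 + 2 * v ^ 2 + 4 * σ * v ^ 3 + 9 * v ^ 4 := by positivity
  have hS := Real.sq_sqrt hD
  have hne : 2 * v * (2 * v + σ) ≠ 0 := by positivity
  rw [eq_div_iff hne] at hm
  have hS2 : Real.sqrt (1 + 2 * v ^ 2 + 4 * σ * v ^ 3 + 9 * v ^ 4)
      = mbar * (2 * v * (2 * v + σ)) + (1 + v ^ 2) := by linarith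
  rw [hS2] at hS
  have key : v * (2 * v + σ) * mbar ^ 2 + (1 + v ^ 2) * mbar - v ^ 2 = 0 := by
    apply mul_left_cancel₀ (mul_pos (by norm_num : (0:ℝ) < 4) ha).ne'
    linear_combination hS
  have main : v * (1 - mbar - mbar)
      - mbar * (1 / v - v * (1 - mbar - mbar) + σ * mbar) = 0 := by
    apply mul_left_cancel₀ hv.ne'
    have h1 : v * (1 / v) = 1 := by field_simp
    linear_combination (-1) * key - mbar * h1
  refine ⟨hu, fun l r => ?_⟩
  simp only [seeley, hu, main]
end

section
/- Let σ ∈ ℝ, K > 0, m = (m₁, m₂) ∈ ℝ² and v = (v₁, v₂) with v₁, v₂ > 0. Set Δm = m₁ − m₂, m̄ = (m₁ + m₂)/2, Δv = v₁ − v₂ and v̄ = (v₁ + v₂)/2. Then the difference of the components of the Seeley vector field with scaled values satisfies the identity f₁(m, Kv) − f₂(m, Kv) = −( (2m̄ + Δm)/(K(2v̄ + Δv)) − (2m̄ − Δm)/(K(2v̄ − Δv)) ) + K v̄ Δm (1 − 2m̄) + K Δv (1 − 2m̄)(1 + m̄); that is, in mean–difference coordinates the dynamics of Δm take the stated rational-polynomial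 form, and in particular the σ-dependent terms cancel from the Δm equation. -/
/-- in mean–difference coordinates `Δm = m₁ − m₂`, `m̄ = (m₁+m₂)/2`,
`Δv = v₁ − v₂`, `v̄ = (v₁+v₂)/2`, the difference of the two components of the Seeley
vector field with values scaled by a gain `K > 0` satisfies
`f₁(m, Kv) − f₂(m, Kv) = −((2m̄+Δm)/(K(2v̄+Δv)) − (2m̄−Δm)/(K(2v̄−Δv)))
  + K v̄ Δm (1−2m̄) + K Δv (1−2m̄)(1+m̄)`;
in particular the `σ`-dependent terms cancel from the `Δm` equation. -/
theorem seeley_mean_difference_form (σ K : ℝ) (hK : 0 < K) (m v : ℝ × ℝ)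
    (hv1 : 0 < v.1) (hv2 : 0 < v.2)
    (Δm mbar Δv vbar : ℝ)
    (hΔm : Δm = m.1 - m.2) (hmbar : mbar = (m.1 + m.2) / 2)
    (hΔv : Δv = v.1 - v.2) (hvbar : vbar = (v.1 + v.2) / 2) :
    (seeley σ m (K * v.1, K * v.2)).1 - (seeley σ m (K * v.1, K * v.2)).2 =
      -((2 * mbar + Δm) / (K * (2 * vbar + Δv)) -
          (2 * mbar - Δm) / (K * (2 * vbar - Δv))) +
        K * vbar * Δm * (1 - 2 * mbar) + K * Δv * (1 - 2 * mbar) * (1 + mbar) := by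
  have h1 : 2 * mbar + Δm = 2 * m.1 := by rw [hΔm, hmbar]; ring
  have h2 : 2 * mbar - Δm = 2 * m.2 := by rw [hΔm, hmbar]; ring
  have h3 : 2 * vbar + Δv = 2 * v.1 := by rw [hΔv, hvbar]; ring
  have h4 : 2 * vbar - Δv = 2 * v.2 := by rw [hΔv, hvbar]; ring
  rw [h1, h2, h3, h4, hΔm, hmbar, hΔv, hvbar]
  have hK' := hK.ne'
  have ha := hv1.ne'
  have hb := hv2.ne'
  simp only [seeley]
  field_simp
  ring
end
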